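/- arXiv:2506.14538 — 4 statements merged into one kernel-verified Lean document; each statement's English description precedes it below -/
import Mathlib

section
/- Let α be a type with an action of the group of finite permutations of ℕ. Let S be a finite subset of ℕ and b ∈ ℕ with b ∉ S. Let X ⊆ α be such that π • X = X for every finite permutation π fixing every element of S ∪ {b}. Write Fix(T) for the subgroup of finite permutations of ℕ fixing every element of T. Then there exists an injective function from the set of Fix(S)-orbits {orbit_{Fix(S)}(y) | y ∈ ⋃_{a ∉ S} (swap a b) • X} into the set of Fix(S ∪ {b})-orbits {orbit_{Fix(S∪{b})}(x) | x ∈ X}, where (swap a b) • X = {(Equiv.swap a b) • x | x ∈ X}. -/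
open Pointwise

/-- The orbit of `y : α` under the group of finite permutations of `ℕ` that fix the
set `T` pointwise. -/
def finPermOrbit {α : Type*} [MulAction (Equiv.Perm ℕ) α] (T : Set ℕ) (y : α) : Set α :=
  {z | ∃ π : Equiv.Perm ℕ, ({a : ℕ | π a ≠ a}).Finite ∧ (∀ a ∈ T, π a = a) ∧ z = π • y}

/-!
For `a, b ∉ S` the transposition `swap a b` lies in `Fix(S)`, so every `Fix(S)`-orbit in the source
already contains an element of `X`. Choose such a representative `x` for each orbit and send the
orbit to the `Fix(S ∪ {b})`-orbit of `x`. Since `Fix(S ∪ {b}) ≤ Fix(S)`, the latter orbit determines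
the `Fix(S)`-orbit it came from.
-/

open Equiv MulAction

section Orbits

variable {G α : Type*} [Group G] [MulAction G α] {H K : Subgroup G}

theorem orbit_eq_orbit_of_le (hKH : K ≤ H) {x y : α} (hxy : orbit K x = orbit K y) :
    orbit H x = orbit H y := by
  obtain ⟨k, hk⟩ := orbit_eq_iff.mp hxy
  exact orbit_eq_iff.mpr ⟨⟨k, hKH k.2⟩, hk⟩

theorem exists_injective_orbits_of_le (hKH : K ≤ H) {X Y : Set α}
    (hYX : ∀ y ∈ Y, ∃ x ∈ X, y ∈ orbit H x) :
    ∃ f : {O : Set α | ∃ y ∈ Y, O = orbit H y} → {O : Set α | ∃ x ∈ X, O = orbit K x},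
      Function.Injective f := by
  have exists_rep (O : {O : Set α | ∃ y ∈ Y, O = orbit H y}) :
      ∃ x ∈ X, (O : Set α) = orbit H x := by
    obtain ⟨_, y, hy, rfl⟩ := O
    obtain ⟨x, hx, hyx⟩ := hYX y hy
    exact ⟨x, hx, orbit_eq_iff.mpr hyx⟩
  choose rep rep_mem eq_orbit_rep using exists_rep
  refine ⟨fun O ↦ ⟨orbit K (rep O), rep O, rep_mem O, rfl⟩, fun O O' h ↦ Subtype.ext ?_⟩
  calc (O : Set α) = orbit H (rep O) := eq_orbit_rep O
    _ = orbit H (rep O') := orbit_eq_orbit_of_le hKH (congrArg Subtype.val h)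
    _ = O' := (eq_orbit_rep O').symm

end Orbits

section FinitaryFixing

variable {Ω : Type*} [DecidableEq Ω]

/-- The group `Fix(T)` of finite permutations of `Ω` fixing `T` pointwise. The finite permutations
are encoded as the subgroup generated by the transpositions. -/
def finitaryFixing (T : Set Ω) : Subgroup (Perm Ω) :=
  Subgroup.closure {σ | σ.IsSwap} ⊓ fixingSubgroup (Perm Ω) T

theorem mem_finitaryFixing {T : Set Ω} {π : Perm Ω} :
    π ∈ finitaryFixing T ↔ {a | π a ≠ a}.Finite ∧ ∀ a ∈ T, π a = a :=
  Subgroup.mem_inf.trans (and_congr mem_closure_isSwap' (mem_fixingSubgroup_iff _))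

theorem finitaryFixing_antitone : Antitone (finitaryFixing : Set Ω → Subgroup (Perm Ω)) :=
  fun _ _ hTU ↦ inf_le_inf_left _ (fixingSubgroup_antitone _ _ hTU)

theorem swap_mem_finitaryFixing {T : Set Ω} {a b : Ω} (ha : a ∉ T) (hb : b ∉ T) :
    swap a b ∈ finitaryFixing T :=
  mem_finitaryFixing.mpr ⟨finite_compl_fixedBy_swap, fun _ hc ↦
    swap_apply_of_ne_of_ne (ne_of_mem_of_not_mem hc ha) (ne_of_mem_of_not_mem hc hb)⟩

theorem orbits_injection_of_fresh_general {α : Type*} [MulAction (Perm Ω) α]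
    (S : Set Ω) (b : Ω) (hb : b ∉ S) (X : Set α) :
    ∃ f : {O : Set α | ∃ y ∈ ⋃ a ∈ {a : Ω | a ∉ S}, swap a b • X,
            O = orbit (finitaryFixing S) y} →
          {O : Set α | ∃ x ∈ X, O = orbit (finitaryFixing (S ∪ {b})) x},
      Function.Injective f := by
  refine exists_injective_orbits_of_le (finitaryFixing_antitone Set.subset_union_left) fun y hy ↦ ?_
  obtain ⟨a, ha, x, hx, rfl⟩ := Set.mem_iUnion₂.mp hy
  exact ⟨x, hx, ⟨swap a b, swap_mem_finitaryFixing ha hb⟩, rfl⟩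

end FinitaryFixing

theorem finPermOrbit_eq_orbit {α : Type*} [MulAction (Perm ℕ) α] (T : Set ℕ) :
    (finPermOrbit T : α → Set α) = orbit (finitaryFixing T) := by
  ext y z
  constructor
  · rintro ⟨π, hfin, hfix, rfl⟩
    exact ⟨⟨π, mem_finitaryFixing.mpr ⟨hfin, hfix⟩⟩, rfl⟩
  · rintro ⟨⟨π, hπ⟩, rfl⟩
    obtain ⟨hfin, hfix⟩ := mem_finitaryFixing.mp hπ
    exact ⟨π, hfin, hfix, rfl⟩

/-- If `b ∉ S` with `S` finite, and `X` is fixed by every finite permutation fixing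
`S ∪ {b}` pointwise, then there is an injection from the set of `Fix(S)`-orbits of
elements of `⋃_{a ∉ S} (swap a b) • X` into the set of `Fix(S ∪ {b})`-orbits of
elements of `X`. -/
theorem orbits_injection_of_fresh {α : Type*} [MulAction (Equiv.Perm ℕ) α]
    (S : Set ℕ) (hS : S.Finite) (b : ℕ) (hb : b ∉ S) (X : Set α)
    (hX : ∀ π : Equiv.Perm ℕ, ({a : ℕ | π a ≠ a}).Finite →
      (∀ a ∈ S ∪ {b}, π a = a) → π • X = X) :
    ∃ f : {O : Set α | ∃ y ∈ ⋃ a ∈ {a : ℕ | a ∉ S}, Equiv.swap a b • X,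
            O = finPermOrbit S y} →
          {O : Set α | ∃ x ∈ X, O = finPermOrbit (S ∪ {b}) x},
      Function.Injective f := by
  rw [finPermOrbit_eq_orbit S, finPermOrbit_eq_orbit (S ∪ {b})]
  exact orbits_injection_of_fresh_general S b hb X
end

section
/- For all natural numbers n₁, n₂ with n₁ ≥ 2 and n₂ ≤ n₁, the following inequality holds: (n₁ − 1) · ∑_{i=0}^{n₂} C(n₂, i) · descFactorial(n₁, i) ≤ n₁^{n₂ + 1}. Equivalently, ∑_{i=0}^{n₂} C(n₂, i) · descFactorial(n₁, i) ≤ n₁^{n₂} · (1 + 1/(n₁ − 1)). -/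
/-!
Write `S b = ∑ i ≤ b, C(b, i) · a^{(i)}`, where `a^{(i)}` is the descending factorial. Pascal's rule
gives `S (b + 1) = ∑ i ≤ b, C(b, i) · (a^{(i)} + a^{(i + 1)})`, and
`a^{(i)} + a^{(i + 1)} = (1 + (a - i)) · a^{(i)}` is at most `a · a^{(i)}` unless `i = 0`, when it
exceeds it by `1`. Hence `S (b + 1) ≤ a · S b + 1`, a recursion that the geometric sum
`1 + a + ⋯ + a ^ b` satisfies with equality.
-/

lemma sum_choose_succ_mul_eq_sum_choose_mul_add {R : Type*} [NonAssocSemiring R] (f : ℕ → R)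
    (n : ℕ) :
    ∑ i ∈ Finset.range (n + 2), ((n + 1).choose i : R) * f i =
      ∑ i ∈ Finset.range (n + 1), (n.choose i : R) * (f i + f (i + 1)) := by
  simpa only [mul_add, Finset.sum_add_distrib] using Finset.sum_choose_succ_mul (fun i _ ↦ f i) n

lemma descFactorial_add_descFactorial_succ_le_mul (a : ℕ) {i : ℕ} (hi : i ≠ 0) :
    a.descFactorial i + a.descFactorial (i + 1) ≤ a * a.descFactorial i := by
  obtain hai | hia := lt_or_ge a i
  · simp [Nat.descFactorial_succ, Nat.descFactorial_of_lt hai]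
  · calc a.descFactorial i + a.descFactorial (i + 1)
        = (1 + (a - i)) * a.descFactorial i := by rw [Nat.descFactorial_succ, one_add_mul]
      _ ≤ a * a.descFactorial i := Nat.mul_le_mul_right _ (by lia)

lemma sum_choose_succ_mul_descFactorial_le (a b : ℕ) :
    ∑ i ∈ Finset.range (b + 2), (b + 1).choose i * a.descFactorial i ≤
      a * ∑ i ∈ Finset.range (b + 1), b.choose i * a.descFactorial i + 1 := by
  have pascal := sum_choose_succ_mul_eq_sum_choose_mul_add a.descFactorial b
  simp only [Nat.cast_id] at pascal
  have tail_le : ∑ i ∈ Finset.range b, b.choose (i + 1) *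
        (a.descFactorial (i + 1) + a.descFactorial (i + 2)) ≤
      a * ∑ i ∈ Finset.range b, b.choose (i + 1) * a.descFactorial (i + 1) := by
    rw [Finset.mul_sum]
    refine Finset.sum_le_sum fun i _ ↦ ?_
    rw [mul_left_comm]
    exact Nat.mul_le_mul_left _ (descFactorial_add_descFactorial_succ_le_mul a i.succ_ne_zero)
  rw [pascal, Finset.sum_range_succ', Finset.sum_range_succ', mul_add]
  simp only [Nat.choose_zero_right, Nat.descFactorial_zero, zero_add, Nat.descFactorial_one]
  lia

theorem sum_choose_descFactorial_le_general (a b : ℕ) :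
    ∑ i ∈ Finset.range (b + 1), b.choose i * a.descFactorial i ≤
      ∑ i ∈ Finset.range (b + 1), a ^ i := by
  induction b with
  | zero => simp
  | succ b ih =>
    calc ∑ i ∈ Finset.range (b + 2), (b + 1).choose i * a.descFactorial i
        ≤ a * ∑ i ∈ Finset.range (b + 1), b.choose i * a.descFactorial i + 1 :=
          sum_choose_succ_mul_descFactorial_le a b
      _ ≤ a * ∑ i ∈ Finset.range (b + 1), a ^ i + 1 := by gcongr
      _ = ∑ i ∈ Finset.range (b + 2), a ^ i := geom_sum_succ.symm

/-- For `n₁ ≥ 2` and `n₂ ≤ n₁`: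
`(n₁ − 1) · ∑_{i=0}^{n₂} C(n₂, i) · descFactorial n₁ i ≤ n₁ ^ (n₂ + 1)`,
i.e. `∑_{i=0}^{n₂} C(n₂, i) · descFactorial n₁ i ≤ n₁ ^ n₂ · (1 + 1/(n₁ − 1))`. -/
theorem sum_choose_descFactorial_le (n₁ n₂ : ℕ) (h₁ : 2 ≤ n₁) (h₂ : n₂ ≤ n₁) :
    (n₁ - 1) * ∑ i ∈ Finset.range (n₂ + 1), n₂.choose i * n₁.descFactorial i ≤
      n₁ ^ (n₂ + 1) := by
  calc (n₁ - 1) * ∑ i ∈ Finset.range (n₂ + 1), n₂.choose i * n₁.descFactorial i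
      ≤ (n₁ - 1) * ∑ i ∈ Finset.range (n₂ + 1), n₁ ^ i :=
        Nat.mul_le_mul_left _ (sum_choose_descFactorial_le_general n₁ n₂)
    _ = n₁ ^ (n₂ + 1) - 1 := by rw [mul_comm, geom_sum_mul_of_one_le (one_le_two.trans h₁)]
    _ ≤ n₁ ^ (n₂ + 1) := Nat.sub_le _ _
end

section
/- For all natural numbers n₁, n₂ with n₁ ≥ n₂ and n₂ ≥ 4, the following inequality holds: ∑_{i=0}^{n₂} C(n₂, i) · descFactorial(n₁, i) ≤ n₁^{n₂}. -/
/-!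
The sum counts the partial matchings of the complete bipartite graph `K_{m,n}` by their size `i`.
A matching of size `i` in `K_{m,n}` extends to `K_{m,n+1}` in `1 + (m - i)` ways: the new vertex
stays unmatched or takes one of the `m - i` free vertices. For `m, n ≥ 2` the average size of a
matching is at least `1`, because the empty matching is outweighed by a matching of size `2`. Hence
passing from `n` to `n + 1` multiplies the count by at most `m`, and the bound propagates from
`n = 4`, where it reads `m ^ 4 - 2 * m ^ 3 + 5 * m ^ 2 + 1 ≤ m ^ 4` and holds for `m ≥ 3`.
-/

/-- The number of partial matchings of the complete bipartite graph `K_{m,n}`: those of size `i` are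
the choices of `i` vertices on the `n`-side together with an injection of them into the `m`-side. -/
def partialMatchingCount (m n : ℕ) : ℕ :=
  ∑ i ∈ Finset.range (n + 1), n.choose i * m.descFactorial i

theorem descFactorial_succ_add_mul_descFactorial (m i : ℕ) :
    m.descFactorial (i + 1) + i * m.descFactorial i = m * m.descFactorial i := by
  rcases le_or_gt i m with him | hmi
  · rw [Nat.descFactorial_succ, ← add_mul, Nat.sub_add_cancel him]
  · simp [Nat.descFactorial_succ, Nat.descFactorial_of_lt hmi]

theorem sum_range_le_sum_range_mul {a : ℕ → ℕ} {n : ℕ} (ha : a 0 ≤ a 2) (hn : 2 ≤ n) :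
    ∑ i ∈ Finset.range (n + 1), a i ≤ ∑ i ∈ Finset.range (n + 1), i * a i := by
  induction n, hn using Nat.le_induction with
  | base =>
    simp only [Finset.sum_range_succ, Finset.sum_range_zero]
    lia
  | succ n _ ih =>
    rw [Finset.sum_range_succ, Finset.sum_range_succ (fun i ↦ i * a i)]
    exact add_le_add ih (Nat.le_mul_of_pos_left _ n.succ_pos)

theorem partialMatchingCount_succ_right (m n : ℕ) :
    partialMatchingCount m (n + 1) = partialMatchingCount m n +
      ∑ i ∈ Finset.range (n + 1), n.choose i * m.descFactorial (i + 1) :=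
  Finset.sum_choose_succ_mul (fun i _ ↦ m.descFactorial i) n

theorem partialMatchingCount_succ_right_add_sum_mul (m n : ℕ) :
    partialMatchingCount m (n + 1) +
        ∑ i ∈ Finset.range (n + 1), i * (n.choose i * m.descFactorial i) =
      partialMatchingCount m n + m * partialMatchingCount m n := by
  rw [partialMatchingCount_succ_right, add_assoc, ← Finset.sum_add_distrib]
  congr 1
  rw [partialMatchingCount, Finset.mul_sum]
  refine Finset.sum_congr rfl fun i _ ↦ ?_
  rw [mul_left_comm i, ← mul_add, descFactorial_succ_add_mul_descFactorial, mul_left_comm]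

theorem partialMatchingCount_le_sum_mul {m n : ℕ} (hm : 2 ≤ m) (hn : 2 ≤ n) :
    partialMatchingCount m n ≤
      ∑ i ∈ Finset.range (n + 1), i * (n.choose i * m.descFactorial i) := by
  have hpos : 0 < n.choose 2 * m.descFactorial 2 :=
    Nat.mul_pos (Nat.choose_pos hn) (Nat.descFactorial_pos.2 hm)
  refine sum_range_le_sum_range_mul ?_ hn
  simpa only [Nat.choose_zero_right, Nat.descFactorial_zero, mul_one] using Nat.succ_le_of_lt hpos

theorem partialMatchingCount_succ_right_le {m n : ℕ} (hm : 2 ≤ m) (hn : 2 ≤ n) :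
    partialMatchingCount m (n + 1) ≤ m * partialMatchingCount m n := by
  have hsum := partialMatchingCount_succ_right_add_sum_mul m n
  have hle := partialMatchingCount_le_sum_mul hm hn
  lia

theorem partialMatchingCount_four_right_add (m : ℕ) :
    partialMatchingCount m 4 + 2 * m ^ 3 = m ^ 4 + 5 * m ^ 2 + 1 := by
  have hchoose : Nat.choose 4 2 = 6 ∧ Nat.choose 4 3 = 4 := ⟨rfl, rfl⟩
  rcases m with _ | _ | _ | k
  · rfl
  · rfl
  · rfl
  · simp only [partialMatchingCount, Finset.sum_range_succ, Finset.sum_range_zero,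
      Nat.succ_descFactorial_succ, Nat.descFactorial_zero, Nat.choose_zero_right,
      Nat.choose_one_right, Nat.choose_self, Nat.descFactorial_one, hchoose]
    ring

theorem partialMatchingCount_four_right_le {m : ℕ} (hm : 3 ≤ m) :
    partialMatchingCount m 4 ≤ m ^ 4 := by
  have hcount := partialMatchingCount_four_right_add m
  have hcubic : 5 * m ^ 2 + 1 ≤ 2 * m ^ 3 := by nlinarith [Nat.mul_le_mul_right (m ^ 2) hm]
  lia

theorem sum_choose_descFactorial_le_pow_general (n₁ n₂ : ℕ) (h₁ : 3 ≤ n₁) (h₂ : 4 ≤ n₂) :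
    ∑ i ∈ Finset.range (n₂ + 1), n₂.choose i * n₁.descFactorial i ≤ n₁ ^ n₂ := by
  change partialMatchingCount n₁ n₂ ≤ n₁ ^ n₂
  induction n₂, h₂ using Nat.le_induction with
  | base => exact partialMatchingCount_four_right_le h₁
  | succ n hn ih =>
    calc partialMatchingCount n₁ (n + 1)
        ≤ n₁ * partialMatchingCount n₁ n :=
          partialMatchingCount_succ_right_le (by lia) (by lia)
      _ ≤ n₁ * n₁ ^ n := Nat.mul_le_mul_left n₁ ih
      _ = n₁ ^ (n + 1) := (pow_succ' n₁ n).symm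

/-- For `n₁ ≥ n₂ ≥ 4`: `∑_{i=0}^{n₂} C(n₂, i) · descFactorial n₁ i ≤ n₁ ^ n₂`. -/
theorem sum_choose_descFactorial_le_pow (n₁ n₂ : ℕ) (h₁ : n₂ ≤ n₁) (h₂ : 4 ≤ n₂) :
    ∑ i ∈ Finset.range (n₂ + 1), n₂.choose i * n₁.descFactorial i ≤ n₁ ^ n₂ :=
  sum_choose_descFactorial_le_pow_general n₁ n₂ (by lia) h₂
end

section
/- Let φ be an fHML formula such that every name-variable binder (⋁_x, ⋀_x, Иx, and each parameter variable x of a fixpoint binder μX(x⃗) or νX(x⃗)) binds a variable occurring free in its body, and such that for every fixpoint subformula (μX(x⃗).φ′)(u⃗) or (νX(x⃗).φ′)(u⃗) of φ the recursion variable X occurs free in φ′. Then |supp(φ)| + 2·‖φ‖ + ζ(φ) ≤ |φ|, where supp(φ) is the finite set of names occurring in φ, ‖φ‖ is the name-binder count of φ, and ζ(φ) is the number of distinct free name variables of φ. -/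
/-!
Every constructor except the fixpoints adds at least as much to `|φ|` as it can add to
`|supp(φ)| + 2‖φ‖ + ζ(φ)`: a vector `u⃗` contributes at most `|u⃗|` names and variables altogether,
because each entry is one or the other, and a bound variable counts `1` in `‖φ‖` but `2` in `|φ|`.

A fixpoint `(μX(x⃗).φ)(u⃗)` may introduce `|u⃗|` new names and free variables, although its size
does not count `u⃗`. They are compensated by the `|x⃗| = |u⃗|` free variables of the body that
become bound.
-/

namespace FHML

/-- Names or name variables: `Sum.inl a` is the concrete name `a` (names are drawn
from a countably infinite set, here `ℕ`); `Sum.inr x` is the name variable `x`. -/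
abbrev NV : Type := ℕ ⊕ ℕ

/-- fHML formulas over a tag type `Tag`.  Recursion variables are drawn from `ℕ`. -/
inductive Formula (Tag : Type) : Type
  | eq (u v : NV)                                            -- u = v
  | neq (u v : NV)                                           -- u ≠ v
  | or (φ₁ φ₂ : Formula Tag)                                 -- φ₁ ∨ φ₂
  | and (φ₁ φ₂ : Formula Tag)                                -- φ₁ ∧ φ₂
  | neg (φ : Formula Tag)                                    -- ¬φ
  | bigOr (x : ℕ) (φ : Formula Tag)                          -- ⋁_x φ
  | bigAnd (x : ℕ) (φ : Formula Tag)                         -- ⋀_x φ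
  | fresh (x : ℕ) (φ : Formula Tag)                          -- Иx.φ
  | diam (t : Tag) (us : List NV) (φ : Formula Tag)          -- ⟨t, u⃗⟩φ
  | box (t : Tag) (us : List NV) (φ : Formula Tag)           -- [t, u⃗]φ
  | rvar (X : ℕ) (us : List NV)                              -- X(u⃗)
  | mu (X : ℕ) (xs : List ℕ) (φ : Formula Tag) (us : List NV)   -- (μX(x⃗).φ)(u⃗)
  | nu (X : ℕ) (xs : List ℕ) (φ : Formula Tag) (us : List NV)   -- (νX(x⃗).φ)(u⃗)

variable {Tag : Type}

/-- Size of a formula. -/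
def size : Formula Tag → ℕ
  | .eq _ _ => 2
  | .neq _ _ => 2
  | .or φ₁ φ₂ => 1 + size φ₁ + size φ₂
  | .and φ₁ φ₂ => 1 + size φ₁ + size φ₂
  | .neg φ => 1 + size φ
  | .bigOr _ φ => 2 + size φ
  | .bigAnd _ φ => 2 + size φ
  | .fresh _ φ => 2 + size φ
  | .diam _ us φ => 1 + us.length + size φ
  | .box _ us φ => 1 + us.length + size φ
  | .rvar _ us => 1 + us.length
  | .mu _ xs φ _ => 1 + size φ + 2 * xs.length
  | .nu _ xs φ _ => 1 + size φ + 2 * xs.length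

/-- The name-binder count `‖φ‖`. -/
def bcount : Formula Tag → ℕ
  | .eq _ _ => 0
  | .neq _ _ => 0
  | .or φ₁ φ₂ => max (bcount φ₁) (bcount φ₂)
  | .and φ₁ φ₂ => max (bcount φ₁) (bcount φ₂)
  | .neg φ => bcount φ
  | .bigOr _ φ => 1 + bcount φ
  | .bigAnd _ φ => 1 + bcount φ
  | .fresh _ φ => 1 + bcount φ
  | .diam _ _ φ => bcount φ
  | .box _ _ φ => bcount φ
  | .rvar _ _ => 0
  | .mu _ xs φ _ => bcount φ + xs.length
  | .nu _ xs φ _ => bcount φ + xs.length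

/-- The concrete names appearing in a name-or-variable. -/
def nmOf : NV → Finset ℕ
  | Sum.inl a => {a}
  | Sum.inr _ => ∅

/-- The concrete names appearing in a list of names-or-variables. -/
def nmList (us : List NV) : Finset ℕ := us.foldr (fun u s => nmOf u ∪ s) ∅

/-- The name variables appearing in a name-or-variable. -/
def vOf : NV → Finset ℕ
  | Sum.inl _ => ∅
  | Sum.inr x => {x}

/-- The name variables appearing in a list of names-or-variables. -/
def vList (us : List NV) : Finset ℕ := us.foldr (fun u s => vOf u ∪ s) ∅

/-- `supp φ`: the (finite) set of concrete names occurring in `φ`. -/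
def supp : Formula Tag → Finset ℕ
  | .eq u v => nmOf u ∪ nmOf v
  | .neq u v => nmOf u ∪ nmOf v
  | .or φ₁ φ₂ => supp φ₁ ∪ supp φ₂
  | .and φ₁ φ₂ => supp φ₁ ∪ supp φ₂
  | .neg φ => supp φ
  | .bigOr _ φ => supp φ
  | .bigAnd _ φ => supp φ
  | .fresh _ φ => supp φ
  | .diam _ us φ => nmList us ∪ supp φ
  | .box _ us φ => nmList us ∪ supp φ
  | .rvar _ us => nmList us
  | .mu _ _ φ us => supp φ ∪ nmList us
  | .nu _ _ φ us => supp φ ∪ nmList us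

/-- The (finite) set of free name variables of `φ`. -/
def freeNV : Formula Tag → Finset ℕ
  | .eq u v => vOf u ∪ vOf v
  | .neq u v => vOf u ∪ vOf v
  | .or φ₁ φ₂ => freeNV φ₁ ∪ freeNV φ₂
  | .and φ₁ φ₂ => freeNV φ₁ ∪ freeNV φ₂
  | .neg φ => freeNV φ
  | .bigOr x φ => freeNV φ \ {x}
  | .bigAnd x φ => freeNV φ \ {x}
  | .fresh x φ => freeNV φ \ {x}
  | .diam _ us φ => vList us ∪ freeNV φ
  | .box _ us φ => vList us ∪ freeNV φ
  | .rvar _ us => vList us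
  | .mu _ xs φ us => (freeNV φ \ xs.toFinset) ∪ vList us
  | .nu _ xs φ us => (freeNV φ \ xs.toFinset) ∪ vList us

/-- The (finite) set of free recursion variables of `φ`. -/
def freeRV : Formula Tag → Finset ℕ
  | .eq _ _ => ∅
  | .neq _ _ => ∅
  | .or φ₁ φ₂ => freeRV φ₁ ∪ freeRV φ₂
  | .and φ₁ φ₂ => freeRV φ₁ ∪ freeRV φ₂
  | .neg φ => freeRV φ
  | .bigOr _ φ => freeRV φ
  | .bigAnd _ φ => freeRV φ
  | .fresh _ φ => freeRV φ
  | .diam _ _ φ => freeRV φ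
  | .box _ _ φ => freeRV φ
  | .rvar X _ => {X}
  | .mu X _ φ _ => freeRV φ \ {X}
  | .nu X _ φ _ => freeRV φ \ {X}

/-- Well-formedness: every name-variable binder binds a variable occurring free in its
body (the parameter variables `x⃗` of a fixpoint binder being pairwise distinct, with
`|x⃗| = |u⃗|` as required by the grammar), and in every fixpoint subformula
`(μX(x⃗).φ′)(u⃗)` or `(νX(x⃗).φ′)(u⃗)` the recursion variable `X` occurs free in `φ′`. -/
def wf : Formula Tag → Prop
  | .eq _ _ => True
  | .neq _ _ => True
  | .or φ₁ φ₂ => wf φ₁ ∧ wf φ₂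
  | .and φ₁ φ₂ => wf φ₁ ∧ wf φ₂
  | .neg φ => wf φ
  | .bigOr x φ => x ∈ freeNV φ ∧ wf φ
  | .bigAnd x φ => x ∈ freeNV φ ∧ wf φ
  | .fresh x φ => x ∈ freeNV φ ∧ wf φ
  | .diam _ _ φ => wf φ
  | .box _ _ φ => wf φ
  | .rvar _ _ => True
  | .mu X xs φ us => xs.Nodup ∧ xs.length = us.length ∧ (∀ x ∈ xs, x ∈ freeNV φ) ∧
      X ∈ freeRV φ ∧ wf φ
  | .nu X xs φ us => xs.Nodup ∧ xs.length = us.length ∧ (∀ x ∈ xs, x ∈ freeNV φ) ∧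
      X ∈ freeRV φ ∧ wf φ

theorem card_inter_toFinset_eq_length {α : Type*} [DecidableEq α] {F : Finset α} {xs : List α}
    (hxs : xs.Nodup) (hF : ∀ x ∈ xs, x ∈ F) : (F ∩ xs.toFinset).card = xs.length := by
  have hsub : xs.toFinset ⊆ F := fun x hx => hF x (List.mem_toFinset.mp hx)
  rw [Finset.inter_eq_right.mpr hsub, List.toFinset_card_of_nodup hxs]

theorem nmList_eq_toLeft (us : List NV) : nmList us = us.toFinset.toLeft := by
  induction us with
  | nil => rfl
  | cons u us ih => cases u <;> ext <;> simp_all [nmList, nmOf]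

theorem vList_eq_toRight (us : List NV) : vList us = us.toFinset.toRight := by
  induction us with
  | nil => rfl
  | cons u us ih => cases u <;> ext <;> simp_all [vList, vOf]

theorem card_nmList_add_card_vList_le (us : List NV) :
    (nmList us).card + (vList us).card ≤ us.length := by
  rw [nmList_eq_toLeft, vList_eq_toRight, Finset.card_toLeft_add_card_toRight]
  exact us.toFinset_card_le

theorem card_nmOf_union_add_card_vOf_union_le (u v : NV) :
    (nmOf u ∪ nmOf v).card + (vOf u ∪ vOf v).card ≤ 2 := by
  simpa [nmList, vList] using card_nmList_add_card_vList_le [u, v]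

theorem card_union_nmList_add_card_union_vList_le (S F : Finset ℕ) (us : List NV) :
    (S ∪ nmList us).card + (F ∪ vList us).card ≤ S.card + F.card + us.length := by
  have names := Finset.card_union_le S (nmList us)
  have vars := Finset.card_union_le F (vList us)
  have entries := card_nmList_add_card_vList_le us
  omega

theorem card_union_nmList_add_card_sdiff_union_vList_le {S F P : Finset ℕ} {us : List NV}
    (hus : us.length ≤ (F ∩ P).card) :
    (S ∪ nmList us).card + (F \ P ∪ vList us).card ≤ S.card + F.card :=
  calc (S ∪ nmList us).card + (F \ P ∪ vList us).card
    _ ≤ S.card + (F \ P).card + us.length :=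
        card_union_nmList_add_card_union_vList_le S (F \ P) us
    _ ≤ S.card + (F \ P).card + (F ∩ P).card := by gcongr
    _ = S.card + F.card := by rw [add_assoc, Finset.card_sdiff_add_card_inter]

/-- In every fixpoint subformula `(μX(x⃗).φ)(u⃗)` or `(νX(x⃗).φ)(u⃗)`, at least `|u⃗|` distinct
parameters among `x⃗` occur free in the body `φ`. This is the part of well-formedness that
controls the names and free variables introduced by argument vectors. -/
def ParamsCoverArgs : Formula Tag → Prop
  | .eq _ _ => True
  | .neq _ _ => True
  | .or φ₁ φ₂ => ParamsCoverArgs φ₁ ∧ ParamsCoverArgs φ₂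
  | .and φ₁ φ₂ => ParamsCoverArgs φ₁ ∧ ParamsCoverArgs φ₂
  | .neg φ => ParamsCoverArgs φ
  | .bigOr _ φ => ParamsCoverArgs φ
  | .bigAnd _ φ => ParamsCoverArgs φ
  | .fresh _ φ => ParamsCoverArgs φ
  | .diam _ _ φ => ParamsCoverArgs φ
  | .box _ _ φ => ParamsCoverArgs φ
  | .rvar _ _ => True
  | .mu _ xs φ us => us.length ≤ (freeNV φ ∩ xs.toFinset).card ∧ ParamsCoverArgs φ
  | .nu _ xs φ us => us.length ≤ (freeNV φ ∩ xs.toFinset).card ∧ ParamsCoverArgs φ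

theorem paramsCoverArgs_of_wf {φ : Formula Tag} (h : wf φ) : ParamsCoverArgs φ := by
  induction φ with
  | eq | neq | rvar => trivial
  | or _ _ ih₁ ih₂ | and _ _ ih₁ ih₂ => exact ⟨ih₁ h.1, ih₂ h.2⟩
  | neg _ ih | diam _ _ _ ih | box _ _ _ ih => exact ih h
  | bigOr _ _ ih | bigAnd _ _ ih | fresh _ _ ih => exact ih h.2
  | mu _ _ _ _ ih | nu _ _ _ _ ih =>
    obtain ⟨hnodup, hlength, hfree, -, hbody⟩ := h
    exact ⟨by rw [card_inter_toFinset_eq_length hnodup hfree, hlength], ih hbody⟩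

theorem supp_bcount_freeNV_le_size_general {φ : Formula Tag} (h : ParamsCoverArgs φ) :
    (supp φ).card + 2 * bcount φ + (freeNV φ).card ≤ size φ := by
  induction φ with simp only [supp, bcount, freeNV, size]
  | eq u v | neq u v =>
    simpa using card_nmOf_union_add_card_vOf_union_le u v
  | or φ₁ φ₂ ih₁ ih₂ | and φ₁ φ₂ ih₁ ih₂ =>
    have names := Finset.card_union_le (supp φ₁) (supp φ₂)
    have vars := Finset.card_union_le (freeNV φ₁) (freeNV φ₂)
    have left := ih₁ h.1
    have right := ih₂ h.2
    omega
  | neg _ ih =>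
    have body := ih h
    omega
  | bigOr x φ ih | bigAnd x φ ih | fresh x φ ih =>
    have vars : (freeNV φ \ {x}).card ≤ (freeNV φ).card := Finset.card_le_card Finset.sdiff_subset
    have body := ih h
    omega
  | diam _ us φ ih | box _ us φ ih =>
    have atoms := card_union_nmList_add_card_union_vList_le (supp φ) (freeNV φ) us
    rw [Finset.union_comm (nmList us), Finset.union_comm (vList us)]
    have body := ih h
    omega
  | rvar _ us =>
    have atoms := card_nmList_add_card_vList_le us
    omega
  | mu _ xs φ us ih | nu _ xs φ us ih =>
    have atoms := card_union_nmList_add_card_sdiff_union_vList_le (S := supp φ) h.1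
    have body := ih h.2
    omega

/-- `|supp(φ)| + 2‖φ‖ + ζ(φ) ≤ |φ|` for well-formed formulas. -/
theorem supp_bcount_freeNV_le_size {Tag : Type} [Fintype Tag]
    (φ : Formula Tag) (h : wf φ) :
    (supp φ).card + 2 * bcount φ + (freeNV φ).card ≤ size φ :=
  supp_bcount_freeNV_le_size_general (paramsCoverArgs_of_wf h)

end FHML
end
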